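/- arXiv:1807.07184 — 2 statements merged into one kernel-verified Lean document; each statement's English description precedes it below -/
import Mathlib

section
/- Let N, P be positive integers, let V be an N×N real orthogonal matrix (Vᵀ V = I_N), let K ⊆ {1,…,N} be a set of indices with |K| = k, and let X̄ ∈ ℝ^{N×P} be a matrix whose i-th row is zero for every i ∉ K. Let N' ∈ ℝ^{N×P} be a noise matrix each of whose columns has Euclidean norm at most ε ≥ 0, and set Y = V X̄ + N' and Ȳ = Vᵀ Y. If min_{i ∈ K} ‖X̄(i,:)‖₂ > 2 ε √P, then for every i ∈ K and every j ∉ K one has ‖Ȳ(i,:)‖₂ > ‖Ȳ(j,:)‖₂; in particular K is exactly the set of indices of the k rows of Ȳ with largest ℓ₂ norm. -/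
open Matrix Finset

/-- ℓ₂ norm of a row vector. -/
noncomputable def rowNorm {P : ℕ} (v : Fin P → ℝ) : ℝ := Real.sqrt (∑ p, v p ^ 2)

theorem rowNorm_eq_norm {P : ℕ} (v : Fin P → ℝ) : rowNorm v = ‖WithLp.toLp 2 v‖ := by
  simp [rowNorm, EuclideanSpace.norm_eq]

theorem rowNorm_noise {N P : ℕ} (V : Matrix (Fin N) (Fin N) ℝ) (hV : Vᵀ * V = 1)
    (Nn : Matrix (Fin N) (Fin P) ℝ) (ε : ℝ) (hε : 0 ≤ ε)
    (hnoise : ∀ p, Real.sqrt (∑ i, Nn i p ^ 2) ≤ ε) (i : Fin N) :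
    rowNorm ((Vᵀ * Nn) i) ≤ ε * Real.sqrt P := by
  have h1 : ∑ l, V l i ^ 2 = 1 := by
    have := congrFun (congrFun hV i) i
    simpa [Matrix.mul_apply, sq] using this
  have h2 : ∀ p, (Vᵀ * Nn) i p ^ 2 ≤ ε ^ 2 := by
    intro p
    have h3 := Finset.sum_mul_sq_le_sq_mul_sq Finset.univ (fun l => V l i) (fun l => Nn l p)
    rw [h1, one_mul] at h3
    have h4 := (Real.sqrt_le_left hε).1 (hnoise p)
    simpa [Matrix.mul_apply] using h3.trans h4
  unfold rowNorm
  apply Real.sqrt_le_iff.2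
  refine ⟨by positivity, ?_⟩
  rw [mul_pow, Real.sq_sqrt (by positivity)]
  refine (Finset.sum_le_sum fun p _ => h2 p).trans ?_
  simp [mul_comm]

/-- Theorem 2 (support identifiability): if the minimum on-support row norm of the
bandlimited GFT matrix exceeds `2 ε √P`, then every on-support row of `Ȳ = Vᵀ Y`
has strictly larger ℓ₂ norm than every off-support row. -/
theorem stmt0 {N P k : ℕ} (hN : 0 < N) (hP : 0 < P)
    (V : Matrix (Fin N) (Fin N) ℝ) (hV : Vᵀ * V = 1)
    (K : Finset (Fin N)) (hK : K.card = k)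
    (Xb : Matrix (Fin N) (Fin P) ℝ) (hsupp : ∀ i, i ∉ K → Xb i = 0)
    (Nn : Matrix (Fin N) (Fin P) ℝ) (ε : ℝ) (hε : 0 ≤ ε)
    (hnoise : ∀ p, Real.sqrt (∑ i, Nn i p ^ 2) ≤ ε)
    (Y : Matrix (Fin N) (Fin P) ℝ) (hY : Y = V * Xb + Nn)
    (Yb : Matrix (Fin N) (Fin P) ℝ) (hYb : Yb = Vᵀ * Y)
    (hmin : ∀ i ∈ K, 2 * ε * Real.sqrt P < rowNorm (Xb i)) :
    ∀ i ∈ K, ∀ j, j ∉ K → rowNorm (Yb j) < rowNorm (Yb i) := by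
  intro i hi j hj
  have hW := rowNorm_noise V hV Nn ε hε hnoise
  have hY2 : Yb = Xb + Vᵀ * Nn := by
    rw [hYb, hY, Matrix.mul_add, ← Matrix.mul_assoc, hV, Matrix.one_mul]
  have hj2 : Yb j = (Vᵀ * Nn) j := by
    rw [hY2]
    change Xb j + (Vᵀ * Nn) j = _
    rw [hsupp j hj, zero_add]
  have hi2 : Xb i = Yb i - (Vᵀ * Nn) i := by
    rw [hY2]
    change _ = Xb i + (Vᵀ * Nn) i - _
    rw [add_sub_cancel_right]
  have ht : rowNorm (Xb i) ≤ rowNorm (Yb i) + rowNorm ((Vᵀ * Nn) i) := by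
    rw [hi2, rowNorm_eq_norm, rowNorm_eq_norm, rowNorm_eq_norm, WithLp.toLp_sub]
    exact norm_sub_le _ _
  have h1 := hW i
  have h2 := hW j
  have h3 := hmin i hi
  rw [hj2]
  linarith
end

section
/- Let N, P be positive integers, let V be an N×N real orthogonal matrix (Vᵀ V = I_N), let K ⊆ {1,…,N} with |K| = k, and let X̄ ∈ ℝ^{N×P} have i-th row zero for every i ∉ K. Let N' ∈ ℝ^{N×P} have every column of Euclidean norm at most ε ≥ 0, and set Ȳ = Vᵀ(V X̄ + N'). Assume min_{i ∈ K} ‖X̄(i,:)‖₂ > 2 ε √P. Then every minimizer Z of the Frobenius norm ‖Z − Ȳ‖_F over all matrices Z ∈ ℝ^{N×P} having at most k nonzero rows satisfies: the set of indices of nonzero rows of Z equals K. -/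
open Matrix Finset

/-- Frobenius norm of a matrix. -/
noncomputable def froNorm {N P : ℕ} (M : Matrix (Fin N) (Fin P) ℝ) : ℝ :=
  Real.sqrt (∑ i, ∑ p, M i p ^ 2)

/-- Theorem 2 (identifiability form): under the SNR condition, every minimizer of
`‖Z − Ȳ‖_F` over matrices with at most `k` nonzero rows has nonzero-row support
exactly equal to `K`. -/
theorem stmt1 {N P k : ℕ} (hN : 0 < N) (hP : 0 < P)
    (V : Matrix (Fin N) (Fin N) ℝ) (hV : Vᵀ * V = 1)
    (K : Finset (Fin N)) (hK : K.card = k)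
    (Xb : Matrix (Fin N) (Fin P) ℝ) (hsupp : ∀ i, i ∉ K → Xb i = 0)
    (Nn : Matrix (Fin N) (Fin P) ℝ) (ε : ℝ) (hε : 0 ≤ ε)
    (hnoise : ∀ p, Real.sqrt (∑ i, Nn i p ^ 2) ≤ ε)
    (Yb : Matrix (Fin N) (Fin P) ℝ) (hYb : Yb = Vᵀ * (V * Xb + Nn))
    (hmin : ∀ i ∈ K, 2 * ε * Real.sqrt P < rowNorm (Xb i)) :
    ∀ Z : Matrix (Fin N) (Fin P) ℝ,
      {i | Z i ≠ 0}.ncard ≤ k →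
      (∀ W : Matrix (Fin N) (Fin P) ℝ, {i | W i ≠ 0}.ncard ≤ k →
        froNorm (Z - Yb) ≤ froNorm (W - Yb)) →
      {i | Z i ≠ 0} = (K : Set (Fin N)) := by
  intro Z hZ hmn
  have hV2 : V * Vᵀ = 1 := mul_eq_one_comm.mp hV
  obtain ⟨E, hE⟩ : ∃ E, E = Vᵀ * Nn := ⟨_, rfl⟩
  have hY : ∀ i p, Yb i p = Xb i p + E i p := by
    intro i p
    rw [hYb, Matrix.mul_add, ← Matrix.mul_assoc, hV, Matrix.one_mul, ← hE, Matrix.add_apply]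
  have hEE : Eᵀ * E = Nnᵀ * Nn := by
    rw [hE, Matrix.transpose_mul, Matrix.transpose_transpose, Matrix.mul_assoc,
      ← Matrix.mul_assoc V, hV2, Matrix.one_mul]
  have hcol : ∀ p, ∑ i, E i p ^ 2 ≤ ε ^ 2 := by
    intro p
    have h1 : ∑ i, E i p ^ 2 = ∑ i, Nn i p ^ 2 := by
      have := congrFun (congrFun hEE p) p
      simpa [Matrix.mul_apply, pow_two] using this
    rw [h1]
    exact (Real.sqrt_le_left hε).mp (hnoise p)
  have hrow : ∀ i, ∑ p, E i p ^ 2 ≤ P * ε ^ 2 := by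
    intro i
    calc ∑ p, E i p ^ 2 ≤ ∑ p : Fin P, ε ^ 2 := by
          refine Finset.sum_le_sum fun p _ => le_trans ?_ (hcol p)
          exact Finset.single_le_sum (f := fun i => E i p ^ 2)
            (fun j _ => sq_nonneg _) (Finset.mem_univ i)
      _ = P * ε ^ 2 := by simp
  obtain ⟨r, hr⟩ : ∃ r : Fin N → ℝ, r = fun i => ∑ p, Yb i p ^ 2 := ⟨_, rfl⟩
  have hout : ∀ i, i ∉ K → r i ≤ P * ε ^ 2 := by
    intro i hi
    have : r i = ∑ p, E i p ^ 2 := by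
      rw [hr]
      refine Finset.sum_congr rfl fun p _ => ?_
      rw [hY, hsupp i hi]; simp
    rw [this]; exact hrow i
  have hin : ∀ i ∈ K, P * ε ^ 2 < r i := by
    intro i hi
    have h1 := hmin i hi
    have h2 : (2 * ε * Real.sqrt P) ^ 2 < ∑ p, Xb i p ^ 2 :=
      (Real.lt_sqrt (by positivity)).mp h1
    rw [mul_pow, Real.sq_sqrt (Nat.cast_nonneg P)] at h2
    have h3 : ∑ p, Xb i p ^ 2 ≤ 2 * r i + 2 * ∑ p, E i p ^ 2 := by
      rw [hr, Finset.mul_sum, Finset.mul_sum, ← Finset.sum_add_distrib]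
      refine Finset.sum_le_sum fun p _ => ?_
      rw [hY]
      nlinarith [sq_nonneg (Xb i p + 2 * E i p)]
    nlinarith [hrow i]
  classical
  obtain ⟨S, hS⟩ : ∃ S : Finset (Fin N), S = Finset.univ.filter (fun i => Z i ≠ 0) := ⟨_, rfl⟩
  have hSc : {i | Z i ≠ 0} = (S : Set (Fin N)) := by ext i; simp [hS]
  rw [hSc, Set.ncard_coe_finset] at hZ
  rw [hSc]
  congr 1
  by_contra hne
  have hKS : ¬ K ⊆ S := fun h => hne (Finset.eq_of_subset_of_card_le h (by omega)).symm
  obtain ⟨W, hW⟩ : ∃ W : Matrix (Fin N) (Fin P) ℝ, W = fun i => if i ∈ K then Yb i else 0 :=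
    ⟨_, rfl⟩
  have hWc : {i | W i ≠ 0}.ncard ≤ k := by
    rw [← hK, ← Set.ncard_coe_finset]
    refine Set.ncard_le_ncard ?_ (Finset.finite_toSet K)
    intro i hi
    by_contra h
    exact hi (by rw [hW]; exact if_neg h)
  have hle := hmn W hWc
  unfold froNorm at hle
  rw [Real.sqrt_le_sqrt_iff (by positivity)] at hle
  have hWs : ∑ i, ∑ p, (W - Yb) i p ^ 2 = ∑ i ∈ Kᶜ, r i := by
    rw [← Finset.sum_compl_add_sum K]
    rw [Finset.sum_eq_zero (s := K), add_zero]
    · refine Finset.sum_congr rfl fun i hi => ?_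
      have hw : W i = 0 := by rw [hW]; exact if_neg (Finset.mem_compl.mp hi)
      simp [hr, hw]
    · intro i hi
      have hw : W i = Yb i := by rw [hW]; exact if_pos hi
      simp [hw]
  have hZs : ∑ i ∈ Sᶜ, r i ≤ ∑ i, ∑ p, (Z - Yb) i p ^ 2 := by
    rw [← Finset.sum_compl_add_sum S (fun i => ∑ p, (Z - Yb) i p ^ 2)]
    have h0 : ∑ i ∈ Sᶜ, r i = ∑ i ∈ Sᶜ, ∑ p, (Z - Yb) i p ^ 2 := by
      refine Finset.sum_congr rfl fun i hi => ?_
      have hz : Z i = 0 := by simpa [hS] using hi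
      simp [hr, hz]
    rw [h0]
    have : 0 ≤ ∑ i ∈ S, ∑ p, (Z - Yb) i p ^ 2 := by positivity
    linarith
  have e1 := Finset.sum_compl_add_sum K r
  have e2 := Finset.sum_compl_add_sum S r
  have e3 := Finset.sum_inter_add_sum_sdiff K S r
  have e4 := Finset.sum_inter_add_sum_sdiff S K r
  rw [Finset.inter_comm] at e4
  have c1 := Finset.card_inter_add_card_sdiff K S
  have c2 := Finset.card_inter_add_card_sdiff S K
  rw [Finset.inter_comm] at c2
  have hcard : (S \ K).card ≤ (K \ S).card := by omega
  have b1 : ∑ i ∈ S \ K, r i ≤ (S \ K).card * (P * ε ^ 2) := by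
    rw [← nsmul_eq_mul]
    exact Finset.sum_le_card_nsmul _ _ _ fun i hi => hout i (Finset.mem_sdiff.mp hi).2
  have b2 : (K \ S).card * (P * ε ^ 2) < ∑ i ∈ K \ S, r i := by
    rw [← nsmul_eq_mul, ← Finset.sum_const]
    exact Finset.sum_lt_sum_of_nonempty (Finset.sdiff_nonempty.mpr hKS)
      fun i hi => hin i (Finset.mem_sdiff.mp hi).1
  have b3 : ((S \ K).card : ℝ) * (P * ε ^ 2) ≤ (K \ S).card * (P * ε ^ 2) := by
    gcongr
  linarith
end
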